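/- Under the one-dimensional resonator setting with uniform resonators and the resonance pattern below, the block matrix 𝒞^{ODE}_*(ω) := (𝒞^{ODE}_{ij}(ω))_{p ≤ i,j ≤ q} satisfies the matrix limit lim_{ω → ω_0, ω ≠ ω_0} (ω − ω_0)·𝒞^{ODE}_*(ω) = δ·v·v_b·Σ·C^{FP}_{sym}·Σ, where: Σ = diag(τ_p, …, τ_q) with τ_p = 1 and τ_{i+1} = τ_i·(−1)^{n_i+m_i}; and C^{FP}_{sym} is the real tridiagonal matrix with entries (C^{FP}_{sym})_{pp} = 1/(r ℓ_p ℓ_{p,p+1}), (C^{FP}_{sym})_{ii} = 1/(r ℓ_i ℓ_{i−1,i}) + 1/(r ℓ_i ℓ_{i,i+1}) for p < i < q, (C^{FP}_{sym})_{qq} = 1/(r ℓ_q ℓ_{q−1,q}), (C^{FP}_{sym})_{i,i+1} = (C^{FP}_{sym})_{i+1,i} = −1/(r ℓ_{i,i+1}·√(ℓ_i ℓ_{i+1})) for p ≤ i ≤ q−1, and zero otherwise, with r := v/v_b. -/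

import Mathlib

/-!
The pairing with `g_i` only sees the two boundary values at resonator `i`, and `𝒯_k` couples only
endpoints facing each other across one gap. Each block entry is therefore an explicit combination
of `k cot(k ℓ)`, `k csc(k ℓ)` and `i k`. At a resonant gap, `sin(k ℓ)` has a simple zero at `ω₀`
with derivative `(-1)^m ℓ / v`, so `(ω - ω₀) csc` tends to `(-1)^m v / ℓ` and `(ω - ω₀) cot`
tends to `v / ℓ` (`tendsto_sub_mul_rcsc`, `tendsto_sub_mul_rcot`). At the ends of the
block the gap is non-resonant or absent, the entry stays bounded, and `ω - ω₀` kills it. The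
signs `(-1)^{n_i + m_i}` in the off-diagonal limits are exactly `τ_i τ_{i+1}`.
-/

open scoped Real

noncomputable section

/-- Real cotangent. -/
def rcot (x : ℝ) : ℝ := Real.cos x / Real.sin x

/-- Real cosecant. -/
def rcsc (x : ℝ) : ℝ := 1 / Real.sin x

/-- The bilinear pairing `⟨f,h⟩ = Σ_{i=1}^N (f_i^- h_i^- + f_i^+ h_i^+)` on the boundary
space `ℂ^{2N}`; the coordinate pair at index `i` is `(f_i^-, f_i^+)`. -/
def pair1d (N : ℕ) (f h : ℕ → ℂ × ℂ) : ℂ :=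
  ∑ i ∈ Finset.Icc 1 N, ((f i).1 * (h i).1 + (f i).2 * (h i).2)

/-- The exterior Dirichlet-to-Neumann matrix `𝒯_k` on `ℂ^{2N}`; `L t` denotes the
spacing `ℓ_{t,t+1}`. -/
def dtn1d (N : ℕ) (L : ℕ → ℝ) (k : ℝ) (f : ℕ → ℂ × ℂ) : ℕ → ℂ × ℂ := fun j =>
  (if j = 1 then Complex.I * (k : ℂ) * (f 1).1
   else ((k * rcsc (k * L (j - 1)) : ℝ) : ℂ) * (f (j - 1)).2
        - ((k * rcot (k * L (j - 1)) : ℝ) : ℂ) * (f j).1,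
   if j = N then Complex.I * (k : ℂ) * (f N).2
   else -((k * rcot (k * L j) : ℝ) : ℂ) * (f j).2
        + ((k * rcsc (k * L j) : ℝ) : ℂ) * (f (j + 1)).1)

/-- The boundary trace vector `g_j ∈ ℂ^{2N}`: `(g_j)_j^- = a_j`, `(g_j)_j^+ = s_j a_j`
with `a_j = √(2/ℓ_j)`, `s_j = (-1)^{n_j}`, all other coordinates zero. -/
def gvec1d (j : ℕ) (ℓj : ℝ) (nj : ℕ) : ℕ → ℂ × ℂ := fun i =>
  if i = j then ((Real.sqrt (2 / ℓj) : ℂ), (-1 : ℂ) ^ nj * (Real.sqrt (2 / ℓj) : ℂ))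
  else (0, 0)


open Filter Topology

/-- The symmetrized Fabry–Pérot matrix `C^{FP}_{sym}` on the index range `p ≤ i, j ≤ q`:
diagonal `1/(r ℓ_p ℓ_{p,p+1})`, `1/(r ℓ_i ℓ_{i−1,i}) + 1/(r ℓ_i ℓ_{i,i+1})`,
`1/(r ℓ_q ℓ_{q−1,q})`; off-diagonal `−1/(r ℓ_{i,i+1} √(ℓ_i ℓ_{i+1}))`; zero otherwise.
Here `L t` denotes the spacing `ℓ_{t,t+1}`. -/
def cfpSym (p q : ℕ) (r : ℝ) (ℓ L : ℕ → ℝ) (i j : ℕ) : ℝ :=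
  if i = j then
    (if i = p then 0 else 1 / (r * ℓ i * L (i - 1))) +
    (if i = q then 0 else 1 / (r * ℓ i * L i))
  else if j = i + 1 then -1 / (r * L i * Real.sqrt (ℓ i * ℓ j))
  else if i = j + 1 then -1 / (r * L j * Real.sqrt (ℓ j * ℓ i))
  else 0

/-- The diagonal signs `τ_i`, with `τ_p = 1` and `τ_{i+1} = τ_i (−1)^{n_i + m_i}`. -/
def tauSign (p : ℕ) (n m : ℕ → ℕ) (i : ℕ) : ℝ :=
  ∏ t ∈ Finset.Ico p i, (-1 : ℝ) ^ (n t + m t)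

/-- Simple pole of the cosecant at a resonant gap: the derivative of `sin (ω / v * L)` at `ω0` is
`cos (m π) * (L / v) = (-1) ^ m * L / v`. -/
lemma tendsto_sub_mul_rcsc {v L ω0 : ℝ} (hv : v ≠ 0) (hL : L ≠ 0) {m : ℕ}
    (h : ω0 / v * L = m * π) :
    Tendsto (fun ω : ℝ => (ω - ω0) * rcsc (ω / v * L)) (𝓝[≠] ω0)
      (𝓝 ((-1) ^ m * (v / L))) := by
  have hd : HasDerivAt (fun ω : ℝ => Real.sin (ω / v * L)) ((-1) ^ m * (1 / v * L)) ω0 := by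
    have h1 : HasDerivAt (fun ω : ℝ => ω / v * L) (1 / v * L) ω0 :=
      ((hasDerivAt_id ω0).div_const v).mul_const L
    have h2 := h1.sin
    rwa [h, Real.cos_nat_mul_pi] at h2
  have hne : ((-1 : ℝ) ^ m * (1 / v * L)) ≠ 0 := by
    have : (-1 : ℝ) ^ m ≠ 0 := pow_ne_zero _ (by norm_num)
    positivity
  have hs := (hasDerivAt_iff_tendsto_slope.1 hd).inv₀ hne
  have hlim : ((-1 : ℝ) ^ m * (1 / v * L))⁻¹ = (-1) ^ m * (v / L) := by
    rcases neg_one_pow_eq_or ℝ m with e | e <;> rw [e] <;> field_simp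
  rw [hlim] at hs
  refine hs.congr fun ω => ?_
  simp [slope, rcsc, h, Real.sin_nat_mul_pi]
  ring

lemma tendsto_sub_mul_rcot {v L ω0 : ℝ} (hv : v ≠ 0) (hL : L ≠ 0) {m : ℕ}
    (h : ω0 / v * L = m * π) :
    Tendsto (fun ω : ℝ => (ω - ω0) * rcot (ω / v * L)) (𝓝[≠] ω0) (𝓝 (v / L)) := by
  have hc : Tendsto (fun ω : ℝ => Real.cos (ω / v * L)) (𝓝[≠] ω0) (𝓝 ((-1) ^ m)) := by
    have : Continuous fun ω : ℝ => Real.cos (ω / v * L) := by fun_prop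
    have h2 := this.tendsto ω0
    rw [h, Real.cos_nat_mul_pi] at h2
    exact h2.mono_left nhdsWithin_le_nhds
  have h3 := (tendsto_sub_mul_rcsc hv hL h).mul hc
  have e : (-1 : ℝ) ^ m * (v / L) * (-1) ^ m = v / L := by
    rcases neg_one_pow_eq_or ℝ m with e | e <;> rw [e] <;> ring
  rw [e] at h3
  refine h3.congr fun ω => ?_
  simp only [rcsc, rcot]
  ring

lemma tendsto_sub_mul_rcot_zero {v L ω0 : ℝ} (h : ∀ t : ℤ, ω0 / v * L ≠ t * π) :
    Tendsto (fun ω : ℝ => (ω - ω0) * rcot (ω / v * L)) (𝓝[≠] ω0) (𝓝 0) := by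
  have hs : Real.sin (ω0 / v * L) ≠ 0 := by
    intro h0
    obtain ⟨t, ht⟩ := Real.sin_eq_zero_iff.1 h0
    exact h t ht.symm
  have hc : ContinuousAt (fun ω : ℝ => (ω - ω0) * rcot (ω / v * L)) ω0 := by
    unfold rcot
    exact ContinuousAt.mul (by fun_prop) (ContinuousAt.div (by fun_prop) (by fun_prop) hs)
  have h1 := hc.tendsto
  simp only [sub_self, zero_mul] at h1
  exact h1.mono_left nhdsWithin_le_nhds

/-- The prefactor `-(δ v_b²) / (2 ω)` and the factor `k = ω / v` common to all entries of `𝒯_k`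
multiply to a constant away from `ω = 0`, so only the limit of `(ω - ω0) * F ω` matters. -/
lemma tendsto_weighted {v vb ω0 : ℝ} (hω0 : ω0 ≠ 0) (δ c l : ℂ)
    (F : ℝ → ℂ)
    (hF : Tendsto (fun ω : ℝ => ((ω : ℂ) - ω0) * F ω) (𝓝[≠] ω0) (𝓝 l)) :
    Tendsto (fun ω : ℝ => ((ω : ℂ) - ω0) *
        (-(δ * (vb : ℂ) ^ 2) / (2 * (ω : ℂ)) * (((ω / v : ℝ) : ℂ) * (c * F ω))))
      (𝓝[≠] ω0) (𝓝 (-(δ * (vb : ℂ) ^ 2) / (2 * (v : ℂ)) * c * l)) := by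
  refine (hF.const_mul (-(δ * (vb : ℂ) ^ 2) / (2 * (v : ℂ)) * c)).congr' ?_
  have : ∀ᶠ ω : ℝ in 𝓝[≠] ω0, ω ≠ 0 :=
    nhdsWithin_le_nhds (isOpen_ne.mem_nhds hω0)
  filter_upwards [this] with ω hω
  have : (ω : ℂ) ≠ 0 := by exact_mod_cast hω
  push_cast
  field_simp

/-- Pairing against `g_i` reads off the two coordinates at resonator `i`. -/
lemma pair1d_gvec1d {N i : ℕ} (h1 : 1 ≤ i) (hN : i ≤ N) (f : ℕ → ℂ × ℂ) (l : ℝ) (k : ℕ) :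
    pair1d N f (gvec1d i l k) =
      (Real.sqrt (2 / l) : ℂ) * ((f i).1 + (-1) ^ k * (f i).2) := by
  unfold pair1d
  rw [Finset.sum_eq_single i]
  · simp [gvec1d]; ring
  · intro b _ hb
    simp [gvec1d, hb]
  · intro h
    simp [h1, hN] at h

lemma sqrt_two_div_mul {a b : ℝ} (ha : 0 < a) :
    Real.sqrt (2 / a) * Real.sqrt (2 / b) = 2 / Real.sqrt (a * b) := by
  rw [← Real.sqrt_mul (by positivity), show 2 / a * (2 / b) = 2 ^ 2 / (a * b) by
    field_simp, Real.sqrt_div (by positivity), Real.sqrt_sq (by norm_num)]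

lemma tauSign_mul_self (p : ℕ) (n m : ℕ → ℕ) (i : ℕ) :
    tauSign p n m i * tauSign p n m i = 1 := by
  unfold tauSign
  rw [← Finset.prod_mul_distrib]
  refine Finset.prod_eq_one fun t _ => ?_
  rcases neg_one_pow_eq_or ℝ (n t + m t) with e | e <;> rw [e] <;> norm_num

lemma tauSign_mul_succ {p i : ℕ} (h : p ≤ i) (n m : ℕ → ℕ) :
    tauSign p n m i * tauSign p n m (i + 1) = (-1) ^ (n i + m i) := by
  have : tauSign p n m (i + 1) = tauSign p n m i * (-1) ^ (n i + m i) := by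
    unfold tauSign
    rw [Finset.prod_Ico_succ_top h]
  rw [this, ← mul_assoc, tauSign_mul_self, one_mul]

/-- the matrix limit
`lim_{ω → ω_0, ω ≠ ω_0} (ω − ω_0) 𝒞^{ODE}_*(ω) = δ v v_b Σ C^{FP}_{sym} Σ`,
stated entrywise on the block `p ≤ i, j ≤ q` (the `(i,j)` entry of
`Σ C^{FP}_{sym} Σ` being `τ_i (C^{FP}_{sym})_{ij} τ_j`), with `r = v/v_b`. -/
theorem capacitance_singular_matrix_limit
    (N : ℕ) (hN : 2 ≤ N)
    (xm xp : ℕ → ℝ)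
    (hord : ∀ i, 1 ≤ i → i ≤ N → xm i < xp i)
    (hsep : ∀ i, 1 ≤ i → i < N → xp i < xm (i + 1))
    (v vb ω0 : ℝ) (hv : 0 < v) (hvb : 0 < vb) (hω0 : ω0 ≠ 0)
    (δ : ℂ)
    (p q : ℕ) (hp : 1 ≤ p) (hpq : p < q) (hqN : q ≤ N)
    (n m : ℕ → ℕ)
    (hn : ∀ i, p ≤ i → i ≤ q → 0 < n i ∧ ω0 / vb * (xp i - xm i) = (n i : ℝ) * π)
    (hm : ∀ i, p ≤ i → i < q → 0 < m i ∧ ω0 / v * (xm (i + 1) - xp i) = (m i : ℝ) * π)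
    (houtl : 1 < p → ∀ t : ℤ, ω0 / v * (xm p - xp (p - 1)) ≠ (t : ℝ) * π)
    (houtr : q < N → ∀ t : ℤ, ω0 / v * (xm (q + 1) - xp q) ≠ (t : ℝ) * π) :
    ∀ i j, p ≤ i → i ≤ q → p ≤ j → j ≤ q →
      Tendsto (fun ω : ℝ => ((ω : ℂ) - (ω0 : ℂ)) *
          (-(δ * (vb : ℂ) ^ 2) / (2 * (ω : ℂ)) *
            pair1d N
              (dtn1d N (fun t => xm (t + 1) - xp t) (ω / v)
                (gvec1d j (xp j - xm j) (n j)))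
              (gvec1d i (xp i - xm i) (n i))))
        (𝓝[≠] ω0)
        (𝓝 (δ * (v : ℂ) * (vb : ℂ) *
          ((tauSign p n m i *
            cfpSym p q (v / vb) (fun t => xp t - xm t) (fun t => xm (t + 1) - xp t) i j *
            tauSign p n m j : ℝ) : ℂ))) := by
  intro i j hpi hiq hpj hjq
  have hi1 : 1 ≤ i := hp.trans hpi
  have hiN : i ≤ N := hiq.trans hqN
  have hvC : (v : ℂ) ≠ 0 := by exact_mod_cast hv.ne'
  have hvbC : (vb : ℂ) ≠ 0 := by exact_mod_cast hvb.ne'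
  have hℓ : ∀ t, p ≤ t → t ≤ q → 0 < xp t - xm t := fun t h1 h2 =>
    sub_pos.2 (hord t (hp.trans h1) (h2.trans hqN))
  have hL : ∀ t, p ≤ t → t < q → 0 < xm (t + 1) - xp t := fun t h1 h2 =>
    sub_pos.2 (hsep t (hp.trans h1) (h2.trans_le hqN))
  simp only [pair1d_gvec1d hi1 hiN]
  have hsq : ∀ a : ℕ, ((-1 : ℂ) ^ a) * (-1) ^ a = 1 := fun a => by
    rw [← mul_pow]; norm_num
  -- The regular radiation entry `i k` at the outer ends contributes nothing.
  have hI : Tendsto (fun ω : ℝ => ((ω : ℂ) - ω0) * Complex.I) (𝓝[≠] ω0) (𝓝 0) := by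
    have : Continuous fun ω : ℝ => ((ω : ℂ) - ω0) * Complex.I := by fun_prop
    have h := this.tendsto ω0
    simp only [sub_self, zero_mul] at h
    exact h.mono_left nhdsWithin_le_nhds
  have cast : ∀ {f : ℝ → ℝ} {l : ℝ},
      Tendsto (fun ω : ℝ => (ω - ω0) * f ω) (𝓝[≠] ω0) (𝓝 l) →
      Tendsto (fun ω : ℝ => ((ω : ℂ) - ω0) * (f ω : ℂ)) (𝓝[≠] ω0) (𝓝 (l : ℂ)) := by
    intro f l h
    have h2 := (Complex.continuous_ofReal.tendsto l).comp h
    refine h2.congr fun ω => ?_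
    simp
  by_cases hij : i = j
  · subst hij
    have hleft : Tendsto (fun ω : ℝ => ((ω : ℂ) - ω0) * (if i = 1 then Complex.I
          else -(rcot (ω / v * (xm (i - 1 + 1) - xp (i - 1))) : ℂ))) (𝓝[≠] ω0)
        (𝓝 (if i = p then 0 else -((v / (xm (i - 1 + 1) - xp (i - 1)) : ℝ) : ℂ))) := by
      by_cases h1 : i = 1
      · have : i = p := by omega
        simpa only [if_pos h1, if_pos this] using hI
      · simp only [if_neg h1, mul_neg]
        by_cases h2 : i = p
        · have h3 : i - 1 + 1 = p := by omega
          have h4 : i - 1 = p - 1 := by omega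
          rw [if_pos h2, h3, h4]
          simpa using (cast (tendsto_sub_mul_rcot_zero (houtl (by omega)))).neg
        · rw [if_neg h2]
          exact (cast (tendsto_sub_mul_rcot hv.ne' (hL (i - 1) (by omega) (by omega)).ne'
            (hm (i - 1) (by omega) (by omega)).2)).neg
    have hright : Tendsto (fun ω : ℝ => ((ω : ℂ) - ω0) * (if i = N then Complex.I
          else -(rcot (ω / v * (xm (i + 1) - xp i)) : ℂ))) (𝓝[≠] ω0)
        (𝓝 (if i = q then 0 else -((v / (xm (i + 1) - xp i) : ℝ) : ℂ))) := by
      by_cases h1 : i = N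
      · have : i = q := by omega
        simpa only [if_pos h1, if_pos this] using hI
      · simp only [if_neg h1, mul_neg]
        by_cases h2 : i = q
        · rw [if_pos h2, h2]
          simpa using (cast (tendsto_sub_mul_rcot_zero (houtr (by omega)))).neg
        · rw [if_neg h2]
          exact (cast (tendsto_sub_mul_rcot hv.ne' (hL i (by omega) (by omega)).ne'
            (hm i (by omega) (by omega)).2)).neg
    have hsum := hleft.add hright
    simp only [← mul_add] at hsum
    have hw := tendsto_weighted (v := v) (vb := vb) hω0 δ
      (((Real.sqrt (2 / (xp i - xm i)) * Real.sqrt (2 / (xp i - xm i)) : ℝ) : ℂ)) _ _ hsum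
    convert hw using 2
    · rename_i ω
      congr 2
      have h3 : i - 1 ≠ i := by omega
      have hm' : (dtn1d N (fun t => xm (t + 1) - xp t) (ω / v)
          (gvec1d i (xp i - xm i) (n i)) i).1 = ((ω / v : ℝ) : ℂ) *
            (Real.sqrt (2 / (xp i - xm i)) * (if i = 1 then Complex.I
              else -(rcot (ω / v * (xm (i - 1 + 1) - xp (i - 1))) : ℂ))) := by
        by_cases h1 : i = 1
        · simp only [dtn1d, gvec1d, if_pos h1, if_pos h1.symm]
          ring
        · simp only [dtn1d, gvec1d, h3, if_neg h1, if_true, if_false]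
          push_cast
          ring
      have hp' : (dtn1d N (fun t => xm (t + 1) - xp t) (ω / v)
          (gvec1d i (xp i - xm i) (n i)) i).2 = ((ω / v : ℝ) : ℂ) *
            ((-1) ^ n i * Real.sqrt (2 / (xp i - xm i)) * (if i = N then Complex.I
              else -(rcot (ω / v * (xm (i + 1) - xp i)) : ℂ))) := by
        have h4 : i + 1 ≠ i := by omega
        by_cases h1 : i = N
        · simp only [dtn1d, gvec1d, if_pos h1, if_pos h1.symm]
          ring
        · simp only [dtn1d, gvec1d, h4, if_neg h1, if_true, if_false]
          push_cast
          ring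
      rw [hm', hp']
      generalize (if i = 1 then Complex.I
        else -(rcot (ω / v * (xm (i - 1 + 1) - xp (i - 1))) : ℂ)) = A
      generalize (if i = N then Complex.I
        else -(rcot (ω / v * (xm (i + 1) - xp i)) : ℂ)) = B
      rw [Complex.ofReal_mul]
      generalize ((Real.sqrt (2 / (xp i - xm i)) : ℝ) : ℂ) = R
      linear_combination ((ω / v : ℝ) : ℂ) * R * R * B * hsq (n i)
    · have hl := hℓ i hpi hiq
      have hlC : ((xp i : ℂ) - xm i) ≠ 0 := by exact_mod_cast hl.ne'
      rw [mul_right_comm (tauSign p n m i), tauSign_mul_self, one_mul,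
        Real.mul_self_sqrt (by positivity)]
      simp only [cfpSym, if_true]
      split_ifs with h1 h2 h2
      · omega
      · have := (hL i (by omega) (by omega)).ne'
        have : ((xm (i+1) : ℂ) - xp i) ≠ 0 := by exact_mod_cast this
        push_cast
        field_simp
        ring
      · have := (hL (i - 1) (by omega) (by omega)).ne'
        have : ((xm (i-1+1) : ℂ) - xp (i-1)) ≠ 0 := by exact_mod_cast this
        push_cast
        field_simp
        ring
      · have := (hL (i - 1) (by omega) (by omega)).ne'
        have h5 : ((xm (i-1+1) : ℂ) - xp (i-1)) ≠ 0 := by exact_mod_cast this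
        have := (hL i (by omega) (by omega)).ne'
        have h6 : ((xm (i+1) : ℂ) - xp i) ≠ 0 := by exact_mod_cast this
        push_cast
        field_simp
        ring
  by_cases hij1 : j = i + 1
  · subst hij1
    have hLi := hL i hpi (by omega)
    have hw := tendsto_weighted (v := v) (vb := vb) hω0 δ
      ((-1 : ℂ) ^ n i * ((Real.sqrt (2 / (xp i - xm i)) *
        Real.sqrt (2 / (xp (i + 1) - xm (i + 1))) : ℝ) : ℂ)) _ _
      (cast (tendsto_sub_mul_rcsc hv.ne' hLi.ne' (hm i hpi (by omega)).2))
    convert hw using 2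
    · rename_i ω
      congr 2
      have h2 : i ≠ N := by omega
      have h3 : i - 1 ≠ i + 1 := by omega
      have h4 : i ≠ 0 := by omega
      simp [dtn1d, gvec1d, h2, h3, h4]
      ring
    · have hl := hℓ i hpi hiq
      have hl' := hℓ (i + 1) hpj hjq
      rw [mul_right_comm (tauSign p n m i), tauSign_mul_succ hpi, sqrt_two_div_mul hl]
      have hr : Real.sqrt ((xp i - xm i) * (xp (i + 1) - xm (i + 1))) ≠ 0 :=
        (Real.sqrt_pos.2 (mul_pos hl hl')).ne'
      simp only [cfpSym, hij, if_true, if_false]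
      generalize Real.sqrt ((xp i - xm i) * (xp (i + 1) - xm (i + 1))) = S at *
      have hS : (S : ℂ) ≠ 0 := by exact_mod_cast hr
      have h6 : ((xm (i+1) : ℂ) - xp i) ≠ 0 := by exact_mod_cast hLi.ne'
      push_cast
      field_simp
      ring
  by_cases hij2 : i = j + 1
  · subst hij2
    have hLj := hL j hpj (by omega)
    have hw := tendsto_weighted (v := v) (vb := vb) hω0 δ
      ((-1 : ℂ) ^ n j * ((Real.sqrt (2 / (xp j - xm j)) *
        Real.sqrt (2 / (xp (j + 1) - xm (j + 1))) : ℝ) : ℂ)) _ _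
      (cast (tendsto_sub_mul_rcsc hv.ne' hLj.ne' (hm j hpj (by omega)).2))
    convert hw using 2
    · rename_i ω
      congr 2
      have h2 : j ≠ 0 := by omega
      have h4 : N ≠ j := by omega
      have h3 : j + 1 + 1 ≠ j := by omega
      simp [dtn1d, gvec1d, h2, h3, h4]
      ring
    · have hl := hℓ j hpj hjq
      have hl' := hℓ (j + 1) hpi hiq
      rw [mul_right_comm (tauSign p n m (j + 1)), mul_comm (tauSign p n m (j + 1)),
        tauSign_mul_succ hpj, sqrt_two_div_mul hl]
      have hr : Real.sqrt ((xp j - xm j) * (xp (j + 1) - xm (j + 1))) ≠ 0 :=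
        (Real.sqrt_pos.2 (mul_pos hl hl')).ne'
      simp only [cfpSym, hij, hij1, if_true, if_false]
      generalize Real.sqrt ((xp j - xm j) * (xp (j + 1) - xm (j + 1))) = S at *
      have hS : (S : ℂ) ≠ 0 := by exact_mod_cast hr
      have h6 : ((xm (j+1) : ℂ) - xp j) ≠ 0 := by exact_mod_cast hLj.ne'
      push_cast
      field_simp
      ring
  -- Resonators at distance at least two do not interact: the entry vanishes identically.
  · have h3 : i - 1 ≠ j := by omega
    have h4 : i + 1 ≠ j := fun h => hij1 h.symm
    have hz : ∀ ω : ℝ, dtn1d N (fun t => xm (t + 1) - xp t) (ω / v)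
        (gvec1d j (xp j - xm j) (n j)) i = (0, 0) := by
      intro ω
      simp only [dtn1d, gvec1d, h3, h4, hij, if_false]
      ext1
      · dsimp only
        split_ifs <;> first | omega | simp
      · dsimp only
        split_ifs <;> first | omega | simp
    simp [hz, cfpSym, hij, hij1, hij2]


end
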